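/- Let a > 0 and let f : ℝ → ℝ be a Schwartz function with Fourier transform f̃(ξ) = ∫_{−∞}^{∞} f(x)·e^{iξx} dx. Then for every x ∈ ℝ, (1/2π)·∫_{−∞}^{∞} [−|ξ|/(|ξ| + a)]·f̃(ξ)·e^{−iξx} dξ = (1/π)·∫_{−∞}^{∞} S_a(x − t)·f'(t) dt. -/

import Mathlib

open Filter MeasureTheory Topology

/-- The sine integral `si(x) = -∫_x^∞ sin t / t dt`, defined via the improper
(limit of interval integrals) form. -/
noncomputable def si (x : ℝ) : ℝ :=
  - limUnder Filter.atTop (fun R : ℝ => ∫ t in x..R, Real.sin t / t)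

/-- The cosine integral `ci(x) = -∫_x^∞ cos t / t dt`, defined via the improper
(limit of interval integrals) form. -/
noncomputable def ci (x : ℝ) : ℝ :=
  - limUnder Filter.atTop (fun R : ℝ => ∫ t in x..R, Real.cos t / t)

/-- The kernel `S_a(x) = sign(x) (si(a|x|) cos(a|x|) - ci(a|x|) sin(a|x|))`, with `S_a(0)=0`. -/
noncomputable def Sker (a x : ℝ) : ℝ :=
  Real.sign x * (si (a * |x|) * Real.cos (a * |x|) - ci (a * |x|) * Real.sin (a * |x|))

/-- The kernel `T_a(x) = si(a|x|) sin(a|x|) + ci(a|x|) cos(a|x|)`. -/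
noncomputable def Tker (a x : ℝ) : ℝ :=
  si (a * |x|) * Real.sin (a * |x|) + ci (a * |x|) * Real.cos (a * |x|)

/-! On `ξ > 0` the contributions of `ξ` and `-ξ` combine: since `(f')~(ξ) = -iξ f̃(ξ)`, they add up
to `-2 / (ξ + a) * ∫ sin (ξ (x - t)) f'(t) dt`. Exchanging the two integrals leaves the kernel
`-∫_0^R sin (ξ u) / (ξ + a) dξ`, which the substitution `s = (ξ + a) u` turns into
`-∫_{au}^{(R + a) u} sin (s - a u) / s ds`. By the addition theorem for the sine it converges to
`S_a(u)` as `R → ∞`. Dirichlet's test bounds it by `3`, uniformly in `u` and `R`, so that dominated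
convergence against `f'` applies. -/

section DirichletTest

variable {E : Type*} [NormedAddCommGroup E] [NormedSpace ℝ E]
  {g g' : ℝ → ℝ} {φ Φ : ℝ → E} {M p q : ℝ}

lemma intervalIntegrable_deriv_of_nonpos (hpq : p ≤ q)
    (hg : ∀ t ∈ Set.Icc p q, HasDerivAt g (g' t) t) (hg' : ∀ t ∈ Set.Icc p q, g' t ≤ 0) :
    IntervalIntegrable g' volume p q := by
  rw [← Set.uIcc_of_le hpq] at hg hg'
  have h := intervalIntegral.intervalIntegrable_deriv_of_nonneg (g := -g) (g' := -g')
    (fun t ht => (hg t ht).continuousAt.neg.continuousWithinAt)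
    (fun t ht => (hg t (Set.Ioo_subset_Icc_self ht)).neg)
    (fun t ht => neg_nonneg.2 (hg' t (Set.Ioo_subset_Icc_self ht)))
  simpa only [neg_neg] using h.neg

lemma norm_integral_deriv_smul_le_of_nonpos (hpq : p ≤ q)
    (hg : ∀ t ∈ Set.Icc p q, HasDerivAt g (g' t) t) (hg' : ∀ t ∈ Set.Icc p q, g' t ≤ 0)
    (hM : ∀ t ∈ Set.Icc p q, ‖Φ t‖ ≤ M) :
    ‖∫ t in p..q, g' t • Φ t‖ ≤ (g p - g q) * M := by
  have hg'_int := intervalIntegrable_deriv_of_nonpos hpq hg hg'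
  calc ‖∫ t in p..q, g' t • Φ t‖ ≤ ∫ t in p..q, -g' t * M := by
        refine intervalIntegral.norm_integral_le_of_norm_le hpq (ae_of_all _ fun t ht => ?_)
          (hg'_int.neg.mul_const M)
        have ht' := Set.Ioc_subset_Icc_self ht
        rw [norm_smul, Real.norm_of_nonpos (hg' t ht')]
        exact mul_le_mul_of_nonneg_left (hM t ht') (neg_nonneg.2 (hg' t ht'))
    _ = (g p - g q) * M := by
        rw [intervalIntegral.integral_mul_const, intervalIntegral.integral_neg,
          intervalIntegral.integral_eq_sub_of_hasDerivAt (Set.uIcc_of_le hpq ▸ hg) hg'_int, neg_sub]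

lemma antitoneOn_of_hasDerivAt_nonpos {s : Set ℝ} (hs : Convex ℝ s)
    (hg : ∀ t ∈ s, HasDerivAt g (g' t) t) (hg' : ∀ t ∈ s, g' t ≤ 0) : AntitoneOn g s :=
  antitoneOn_of_hasDerivWithinAt_nonpos hs (fun t ht => (hg t ht).continuousAt.continuousWithinAt)
    (fun t ht => (hg t (interior_subset ht)).hasDerivWithinAt)
    fun t ht => hg' t (interior_subset ht)

variable [CompleteSpace E]

lemma norm_integral_smul_le_of_deriv_nonpos (hpq : p ≤ q)
    (hg : ∀ t ∈ Set.Icc p q, HasDerivAt g (g' t) t) (hg' : ∀ t ∈ Set.Icc p q, g' t ≤ 0)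
    (hgq : 0 ≤ g q) (hΦ : ∀ t ∈ Set.Icc p q, HasDerivAt Φ (φ t) t)
    (hφ : IntervalIntegrable φ volume p q) (hM : ∀ t ∈ Set.Icc p q, ‖Φ t‖ ≤ M) :
    ‖∫ t in p..q, g t • φ t‖ ≤ 2 * M * g p := by
  have hIcc : Set.uIcc p q = Set.Icc p q := Set.uIcc_of_le hpq
  have hp_mem : p ∈ Set.Icc p q := Set.left_mem_Icc.2 hpq
  have hq_mem : q ∈ Set.Icc p q := Set.right_mem_Icc.2 hpq
  have hg_le : g q ≤ g p :=
    antitoneOn_of_hasDerivAt_nonpos (convex_Icc p q) hg hg' hp_mem hq_mem hpq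
  have hboundary : ∀ t ∈ Set.Icc p q, 0 ≤ g t → ‖g t • Φ t‖ ≤ g t * M := fun t ht h0 => by
    rw [norm_smul, Real.norm_of_nonneg h0]
    exact mul_le_mul_of_nonneg_left (hM t ht) h0
  calc ‖∫ t in p..q, g t • φ t‖
      = ‖g q • Φ q - g p • Φ p - ∫ t in p..q, g' t • Φ t‖ := by
        rw [intervalIntegral.integral_smul_deriv_eq_deriv_smul (hIcc ▸ hg) (hIcc ▸ hΦ)
          (intervalIntegrable_deriv_of_nonpos hpq hg hg') hφ]
    _ ≤ ‖g q • Φ q‖ + ‖g p • Φ p‖ + ‖∫ t in p..q, g' t • Φ t‖ :=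
        (norm_sub_le _ _).trans (by gcongr; exact norm_sub_le _ _)
    _ ≤ g q * M + g p * M + (g p - g q) * M := by
        gcongr
        · exact hboundary q hq_mem hgq
        · exact hboundary p hp_mem (hgq.trans hg_le)
        · exact norm_integral_deriv_smul_le_of_nonpos hpq hg hg' hM
    _ = 2 * M * g p := by ring

lemma exists_tendsto_integral_smul_of_deriv_nonpos
    (hg : ∀ t ∈ Set.Ici p, HasDerivAt g (g' t) t) (hg' : ∀ t ∈ Set.Ici p, g' t ≤ 0)
    (hg_lim : Tendsto g atTop (𝓝 0)) (hΦ : ∀ t ∈ Set.Ici p, HasDerivAt Φ (φ t) t)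
    (hφ : ∀ q ∈ Set.Ici p, IntervalIntegrable φ volume p q) (hM : ∀ t ∈ Set.Ici p, ‖Φ t‖ ≤ M) :
    ∃ L, Tendsto (fun R => ∫ t in p..R, g t • φ t) atTop (𝓝 L) := by
  have hg_cont : ContinuousOn g (Set.Ici p) := fun t ht => (hg t ht).continuousAt.continuousWithinAt
  have hg_anti : AntitoneOn g (Set.Ici p) :=
    antitoneOn_of_hasDerivAt_nonpos (convex_Ici p) hg hg'
  have hg_nonneg : ∀ t ∈ Set.Ici p, 0 ≤ g t := fun t ht =>
    le_of_tendsto hg_lim <| (eventually_ge_atTop t).mono fun s hs =>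
      hg_anti ht (Set.mem_Ici.2 (ht.trans hs)) hs
  have hint : ∀ q ∈ Set.Ici p, IntervalIntegrable (fun t => g t • φ t) volume p q := fun q hq =>
    (hφ q hq).continuousOn_smul <| hg_cont.mono <|
      Set.uIcc_of_le (Set.mem_Ici.1 hq) ▸ Set.Icc_subset_Ici_self
  have htail : ∀ r ∈ Set.Ici p, ∀ s ≥ r,
      dist (∫ t in p..s, g t • φ t) (∫ t in p..r, g t • φ t) ≤ 2 * M * g r := fun r hr s hs => by
    have hsub : Set.Icc r s ⊆ Set.Ici p := fun t ht => hr.trans ht.1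
    have hs' : s ∈ Set.Ici p := hr.trans hs
    rw [dist_eq_norm, intervalIntegral.integral_interval_sub_left (hint s hs') (hint r hr)]
    exact norm_integral_smul_le_of_deriv_nonpos hs (fun t ht => hg t (hsub ht))
      (fun t ht => hg' t (hsub ht)) (hg_nonneg s hs') (fun t ht => hΦ t (hsub ht))
      ((hφ r hr).symm.trans (hφ s hs')) fun t ht => hM t (hsub ht)
  refine cauchySeq_tendsto_of_complete (Metric.cauchySeq_iff'.2 fun ε hε => ?_)
  have hlim : Tendsto (fun r => 2 * M * g r) atTop (𝓝 0) := by
    simpa only [mul_zero] using hg_lim.const_mul (2 * M)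
  obtain ⟨r, hrε, hr⟩ := ((hlim.eventually_lt_const hε).and (eventually_ge_atTop p)).exists
  exact ⟨r, fun s hs => (htail r hr s hs).trans_lt hrε⟩

end DirichletTest

section SineCosineIntegrals

variable {φ Φ : ℝ → ℝ} {M p q : ℝ}

lemma abs_integral_div_id_le (hp : 0 < p) (hpq : p ≤ q) (hφ : Continuous φ)
    (hΦ : ∀ t, HasDerivAt Φ (φ t) t) (hM : ∀ t, |Φ t| ≤ M) :
    |∫ t in p..q, φ t / t| ≤ 2 * M / p := by
  simpa only [smul_eq_mul, ← div_eq_inv_mul, ← div_eq_mul_inv, Real.norm_eq_abs] using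
    norm_integral_smul_le_of_deriv_nonpos (g := fun t => t⁻¹) hpq
      (fun t ht => hasDerivAt_inv (hp.trans_le ht.1).ne')
      (fun t _ => neg_nonpos.2 (by positivity)) (inv_nonneg.2 (hp.le.trans hpq))
      (fun t _ => hΦ t) (hφ.intervalIntegrable p q) (fun t _ => hM t)

lemma exists_tendsto_integral_div_id (hp : 0 < p) (hφ : Continuous φ)
    (hΦ : ∀ t, HasDerivAt Φ (φ t) t) (hM : ∀ t, |Φ t| ≤ M) :
    ∃ L, Tendsto (fun R => ∫ t in p..R, φ t / t) atTop (𝓝 L) := by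
  simpa only [smul_eq_mul, ← div_eq_inv_mul] using
    exists_tendsto_integral_smul_of_deriv_nonpos (g := fun t => t⁻¹) (p := p)
      (fun t ht => hasDerivAt_inv (hp.trans_le ht).ne')
      (fun t _ => neg_nonpos.2 (by positivity)) tendsto_inv_atTop_zero
      (fun t _ => hΦ t) (fun q _ => hφ.intervalIntegrable p q) (fun t _ => hM t)

lemma tendsto_integral_sin_div (hp : 0 < p) :
    Tendsto (fun R => ∫ t in p..R, Real.sin t / t) atTop (𝓝 (-si p)) := by
  rw [si, neg_neg]
  exact tendsto_nhds_limUnder <| exists_tendsto_integral_div_id (Φ := fun t => -Real.cos t) hp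
    Real.continuous_sin (fun t => by simpa using (Real.hasDerivAt_cos t).fun_neg)
    fun t => (abs_neg _).trans_le (Real.abs_cos_le_one t)

lemma tendsto_integral_cos_div (hp : 0 < p) :
    Tendsto (fun R => ∫ t in p..R, Real.cos t / t) atTop (𝓝 (-ci p)) := by
  rw [ci, neg_neg]
  exact tendsto_nhds_limUnder <| exists_tendsto_integral_div_id hp
    Real.continuous_cos Real.hasDerivAt_sin Real.abs_sin_le_one

lemma intervalIntegrable_div_id (hp : 0 < p) (hpq : p ≤ q) (hφ : Continuous φ) :
    IntervalIntegrable (fun t => φ t / t) volume p q := by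
  refine (hφ.continuousOn.div continuousOn_id fun t ht => ?_).intervalIntegrable
  rw [Set.uIcc_of_le hpq] at ht
  exact (hp.trans_le ht.1).ne'

lemma tendsto_integral_sin_sub_div (hp : 0 < p) (c : ℝ) :
    Tendsto (fun R => ∫ t in p..R, Real.sin (t - c) / t) atTop
      (𝓝 (ci p * Real.sin c - si p * Real.cos c)) := by
  have h := ((tendsto_integral_sin_div hp).mul_const (Real.cos c)).sub
    ((tendsto_integral_cos_div hp).mul_const (Real.sin c))
  rw [show -si p * Real.cos c - -ci p * Real.sin c = ci p * Real.sin c - si p * Real.cos c by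
    ring] at h
  refine h.congr' ?_
  filter_upwards [eventually_ge_atTop p] with R hR
  rw [← intervalIntegral.integral_mul_const, ← intervalIntegral.integral_mul_const,
    ← intervalIntegral.integral_sub
      ((intervalIntegrable_div_id hp hR Real.continuous_sin).mul_const _)
      ((intervalIntegrable_div_id hp hR Real.continuous_cos).mul_const _)]
  congr with t
  rw [Real.sin_sub]
  ring

lemma abs_integral_sin_sub_left_div_le (hp : 0 < p) (hpq : p ≤ q) :
    |∫ t in p..q, Real.sin (t - p) / t| ≤ 3 := by
  have hshort : ∀ {r : ℝ}, p ≤ r → r ≤ p + 1 → |∫ t in p..r, Real.sin (t - p) / t| ≤ 1 := by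
    intro r hpr hr
    have hbound : ∀ t ∈ Set.uIoc p r, ‖Real.sin (t - p) / t‖ ≤ 1 := fun t ht => by
      rw [Set.uIoc_of_le hpr] at ht
      have ht0 : 0 < t := hp.trans ht.1
      rw [norm_div, Real.norm_of_nonneg ht0.le, div_le_one ht0]
      calc |Real.sin (t - p)| ≤ |t - p| := Real.abs_sin_le_abs
        _ = t - p := abs_of_pos (sub_pos.2 ht.1)
        _ ≤ t := sub_le_self t hp.le
    calc |∫ t in p..r, Real.sin (t - p) / t| ≤ 1 * |r - p| :=
          intervalIntegral.norm_integral_le_of_norm_le_const hbound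
      _ = r - p := by rw [one_mul, abs_of_nonneg (sub_nonneg.2 hpr)]
      _ ≤ 1 := by linarith
  rcases le_total q (p + 1) with hq | hq
  · exact (hshort hpq hq).trans (by norm_num)
  have hp1 : 0 < p + 1 := by positivity
  have hlong : |∫ t in (p + 1)..q, Real.sin (t - p) / t| ≤ 2 := by
    refine (abs_integral_div_id_le (Φ := fun t => -Real.cos (t - p)) (M := 1) hp1 hq
      (by fun_prop) (fun t => ?_) fun t => (abs_neg _).trans_le (Real.abs_cos_le_one _)).trans ?_
    · simpa using ((hasDerivAt_id t).sub_const p).cos.fun_neg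
    · rw [div_le_iff₀ hp1]
      linarith
  have hcont : Continuous fun t => Real.sin (t - p) := by fun_prop
  rw [← intervalIntegral.integral_add_adjacent_intervals
    (intervalIntegrable_div_id hp (by linarith) hcont) (intervalIntegrable_div_id hp1 hq hcont)]
  linarith [abs_add_le (∫ t in p..(p + 1), Real.sin (t - p) / t)
    (∫ t in (p + 1)..q, Real.sin (t - p) / t), hshort (le_add_of_nonneg_right zero_le_one) le_rfl]

end SineCosineIntegrals

section TruncatedKernel

variable {E : Type*} [NormedAddCommGroup E] [NormedSpace ℝ E] {a R u : ℝ} {g : ℝ → E}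

/-- The truncation of `Sker a` to frequencies at most `R`. For `0 ≤ R` the absolute value is
redundant on the domain of integration; it makes the integrand continuous on the whole line. -/
noncomputable def truncSker (a R u : ℝ) : ℝ := -∫ ξ in (0 : ℝ)..R, Real.sin (ξ * u) / (|ξ| + a)

lemma Sker_neg (a u : ℝ) : Sker a (-u) = -Sker a u := by
  simp only [Sker, abs_neg, Real.sign_neg, neg_mul]

lemma Sker_zero (a : ℝ) : Sker a 0 = 0 := by
  simp only [Sker, Real.sign_zero, zero_mul]

lemma truncSker_neg (a R u : ℝ) : truncSker a R (-u) = -truncSker a R u := by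
  simp only [truncSker, mul_neg, Real.sin_neg, neg_div, intervalIntegral.integral_neg]

lemma truncSker_zero (a R : ℝ) : truncSker a R 0 = 0 := by
  simp only [truncSker, mul_zero, Real.sin_zero, zero_div, intervalIntegral.integral_zero, neg_zero]

lemma continuous_sin_mul_div_abs_add (ha : 0 < a) :
    Continuous fun p : ℝ × ℝ => Real.sin (p.1 * p.2) / (|p.1| + a) :=
  Continuous.div (by fun_prop) (by fun_prop) fun p => by positivity

lemma continuous_truncSker (ha : 0 < a) (R : ℝ) : Continuous (truncSker a R) := by
  have hcont : Continuous (Function.uncurry fun u ξ : ℝ => Real.sin (ξ * u) / (|ξ| + a)) :=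
    (continuous_sin_mul_div_abs_add ha).comp (f := fun p : ℝ × ℝ => (p.2, p.1)) continuous_swap
  exact (intervalIntegral.continuous_parametric_intervalIntegral_of_continuous' hcont 0 R).neg

lemma truncSker_eq_integral_sin_sub_div (hR : 0 ≤ R) (hu : 0 < u) :
    truncSker a R u = -∫ t in (a * u)..((R + a) * u), Real.sin (t - a * u) / t := by
  have hsubst := intervalIntegral.smul_integral_comp_mul_add (a := 0) (b := R)
    (fun t => Real.sin (t - a * u) / t) u (a * u)
  rw [mul_zero, zero_add, mul_comm u R, ← add_mul] at hsubst
  rw [truncSker, ← hsubst, ← intervalIntegral.integral_smul]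
  congr 1
  refine intervalIntegral.integral_congr fun ξ hξ => ?_
  rw [Set.uIcc_of_le hR] at hξ
  rw [smul_eq_mul, add_sub_cancel_right, abs_of_nonneg hξ.1, mul_div_assoc', mul_comm ξ u,
    show u * ξ + a * u = u * (ξ + a) by ring, mul_div_mul_left _ _ hu.ne']

lemma abs_truncSker_le (ha : 0 < a) (hR : 0 ≤ R) (u : ℝ) : |truncSker a R u| ≤ 3 := by
  have hpos : ∀ v, 0 < v → |truncSker a R v| ≤ 3 := fun v hv => by
    rw [truncSker_eq_integral_sin_sub_div hR hv, abs_neg]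
    exact abs_integral_sin_sub_left_div_le (mul_pos ha hv) (by gcongr; linarith)
  rcases lt_trichotomy u 0 with hu | rfl | hu
  · simpa only [truncSker_neg, abs_neg] using hpos (-u) (neg_pos.2 hu)
  · simp [truncSker_zero]
  · exact hpos u hu

lemma tendsto_truncSker (ha : 0 < a) (u : ℝ) :
    Tendsto (fun R => truncSker a R u) atTop (𝓝 (Sker a u)) := by
  have hpos : ∀ v, 0 < v → Tendsto (fun R => truncSker a R v) atTop (𝓝 (Sker a v)) := fun v hv => by
    have hend : Tendsto (fun R : ℝ => (R + a) * v) atTop atTop :=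
      (tendsto_atTop_add_const_right _ a tendsto_id).atTop_mul_const hv
    have h := ((tendsto_integral_sin_sub_div (mul_pos ha hv) (a * v)).comp hend).neg
    rw [neg_sub] at h
    rw [Sker, Real.sign_of_pos hv, abs_of_pos hv, one_mul]
    refine h.congr' ?_
    filter_upwards [eventually_ge_atTop 0] with R hR
    exact (truncSker_eq_integral_sin_sub_div hR hv).symm
  rcases lt_trichotomy u 0 with hu | rfl | hu
  · simpa only [truncSker_neg, Sker_neg, neg_neg] using (hpos (-u) (neg_pos.2 hu)).neg
  · simp only [truncSker_zero, Sker_zero, tendsto_const_nhds]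
  · exact hpos u hu

lemma integral_integral_sin_div_smul [CompleteSpace E] (ha : 0 < a) (hg : Integrable g) (R x : ℝ) :
    ∫ ξ in (0 : ℝ)..R, ∫ t, (Real.sin (ξ * (x - t)) / (|ξ| + a)) • g t =
      -∫ t, truncSker a R (x - t) • g t := by
  have hcont : Continuous fun p : ℝ × ℝ => Real.sin (p.1 * (x - p.2)) / (|p.1| + a) :=
    (continuous_sin_mul_div_abs_add ha).comp (f := fun p : ℝ × ℝ => (p.1, x - p.2)) (by fun_prop)
  have hbound : ∀ p : ℝ × ℝ, ‖Real.sin (p.1 * (x - p.2)) / (|p.1| + a)‖ ≤ 1 / a := fun p => by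
    rw [norm_div, Real.norm_of_nonneg (by positivity : 0 ≤ |p.1| + a)]
    exact div_le_div₀ zero_le_one (Real.abs_sin_le_one _) ha (le_add_of_nonneg_left (abs_nonneg _))
  have : IsFiniteMeasure (volume.restrict (Set.uIoc 0 R)) := by
    rw [Set.uIoc]
    infer_instance
  have hint : Integrable (Function.uncurry fun ξ t : ℝ =>
      (Real.sin (ξ * (x - t)) / (|ξ| + a)) • g t)
      ((volume.restrict (Set.uIoc 0 R)).prod volume) :=
    (hg.comp_snd _).bdd_smul (1 / a) hcont.aestronglyMeasurable (ae_of_all _ hbound)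
  rw [intervalIntegral_integral_swap hint, ← integral_neg]
  congr with t
  rw [intervalIntegral.integral_smul_const, truncSker, neg_smul, neg_neg]

lemma tendsto_integral_truncSker_smul (ha : 0 < a) (hg : Integrable g) (x : ℝ) :
    Tendsto (fun R => ∫ t, truncSker a R (x - t) • g t) atTop
      (𝓝 (∫ t, Sker a (x - t) • g t)) := by
  refine tendsto_integral_filter_of_dominated_convergence (fun t => 3 * ‖g t‖)
    (Eventually.of_forall fun R => ?_) ?_ (hg.norm.const_mul 3)
    (ae_of_all _ fun t => (tendsto_truncSker ha (x - t)).smul_const (g t))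
  · exact ((continuous_truncSker ha R).comp
      (continuous_const.sub continuous_id)).aestronglyMeasurable.smul hg.aestronglyMeasurable
  · filter_upwards [eventually_ge_atTop 0] with R hR
    refine ae_of_all _ fun t => ?_
    rw [norm_smul]
    exact mul_le_mul_of_nonneg_right (abs_truncSker_le ha hR _) (norm_nonneg _)

end TruncatedKernel

section FourierMultiplier

open scoped FourierTransform

variable {E : Type*} [NormedAddCommGroup E] [NormedSpace ℂ E] {a R : ℝ} {f f' g : ℝ → E}

/-- The Fourier transform `f̃(ξ) = ∫ f(y) e^{iξy} dy`, in the convention of the theorem rather than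
Mathlib's `𝓕 f w = ∫ f(y) e^{-2πiwy} dy`. -/
noncomputable def fourierTilde (f : ℝ → E) (ξ : ℝ) : E :=
  ∫ y : ℝ, Complex.exp (Complex.I * ξ * y) • f y

lemma norm_exp_I_mul_mul (ξ y : ℝ) : ‖Complex.exp (Complex.I * ξ * y)‖ = 1 := by
  rw [mul_assoc, ← Complex.ofReal_mul, Complex.norm_exp_I_mul_ofReal]

lemma integrable_exp_smul (hg : Integrable g) (ξ : ℝ) :
    Integrable fun y : ℝ => Complex.exp (Complex.I * ξ * y) • g y :=
  hg.bdd_smul 1 (by fun_prop) (ae_of_all _ fun y => (norm_exp_I_mul_mul ξ y).le)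

lemma continuous_fourierTilde (hf : Integrable f) : Continuous (fourierTilde f) := by
  refine continuous_of_dominated (fun ξ => (integrable_exp_smul hf ξ).aestronglyMeasurable)
    (fun ξ => ae_of_all _ fun y => ?_) hf.norm (ae_of_all _ fun y => by fun_prop)
  rw [norm_smul, norm_exp_I_mul_mul, one_mul]

lemma fourierTilde_eq_fourier (f : ℝ → E) (ξ : ℝ) :
    fourierTilde f ξ = 𝓕 f (-(ξ / (2 * Real.pi))) := by
  rw [Real.fourier_real_eq_integral_exp_smul, fourierTilde]
  congr with y
  congr 2
  push_cast
  field_simp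

lemma smul_fourierTilde (hf : Integrable f) (hf' : ∀ y, HasDerivAt f (f' y) y)
    (hf'_int : Integrable f') (ξ : ℝ) :
    (ξ : ℂ) • fourierTilde f ξ = Complex.I • fourierTilde f' ξ := by
  have hderiv : deriv f = f' := funext fun y => (hf' y).deriv
  have h := Real.fourier_deriv hf (fun y => (hf' y).differentiableAt) (hderiv ▸ hf'_int)
  rw [fourierTilde_eq_fourier f', ← hderiv, h, fourierTilde_eq_fourier, smul_smul]
  congr 1
  push_cast
  field_simp
  rw [Complex.I_sq, mul_neg_one, neg_neg]

lemma exp_smul_fourierTilde_sub (hg : Integrable g) (ξ x : ℝ) :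
    Complex.exp (-(Complex.I * ξ * x)) • fourierTilde g ξ -
        Complex.exp (Complex.I * ξ * x) • fourierTilde g (-ξ) =
      (-2 * Complex.I) • ∫ t, Real.sin (ξ * (x - t)) • g t := by
  rw [fourierTilde, fourierTilde, ← integral_smul, ← integral_smul, ← integral_smul,
    ← integral_sub ((integrable_exp_smul hg ξ).fun_smul _)
      ((integrable_exp_smul hg (-ξ)).fun_smul _)]
  congr with t
  rw [← Complex.coe_smul (Real.sin _), smul_smul, smul_smul, smul_smul, ← sub_smul,
    ← Complex.exp_add, ← Complex.exp_add]
  congr 1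
  rw [show -(Complex.I * ξ * x) + Complex.I * ξ * t = -((ξ * (x - t) : ℝ) : ℂ) * Complex.I by
      push_cast; ring,
    show Complex.I * ξ * x + Complex.I * (-ξ : ℝ) * t = ((ξ * (x - t) : ℝ) : ℂ) * Complex.I by
      push_cast; ring,
    Complex.ofReal_sin, Complex.sin]
  linear_combination (Complex.exp (-((ξ * (x - t) : ℝ) : ℂ) * Complex.I) -
    Complex.exp (((ξ * (x - t) : ℝ) : ℂ) * Complex.I)) * Complex.I_sq

/-- The integrand of the inverse Fourier integral at `x` of `-|ξ| / (|ξ| + a) * f̃(ξ)`. -/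
noncomputable def multiplierIntegrand (a : ℝ) (f : ℝ → E) (x ξ : ℝ) : E :=
  (((-|ξ| / (|ξ| + a) : ℝ) : ℂ) * Complex.exp (-(Complex.I * ξ * x))) • fourierTilde f ξ

lemma continuous_multiplierIntegrand (ha : 0 < a) (hf : Integrable f) (x : ℝ) :
    Continuous (multiplierIntegrand a f x) := by
  have hsymbol : Continuous fun ξ : ℝ => -|ξ| / (|ξ| + a) :=
    Continuous.div (by fun_prop) (by fun_prop) fun ξ => by positivity
  exact ((Complex.continuous_ofReal.comp hsymbol).mul (by fun_prop)).smul
    (continuous_fourierTilde hf)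

lemma multiplierIntegrand_eq_smul_fourierTilde_deriv (hf : Integrable f)
    (hf' : ∀ y, HasDerivAt f (f' y) y) (hf'_int : Integrable f') (a x : ℝ) {s ξ : ℝ}
    (hs : |ξ| = s * ξ) :
    multiplierIntegrand a f x ξ =
      (-(Complex.I * s / (|ξ| + a : ℝ))) •
        Complex.exp (-(Complex.I * ξ * x)) • fourierTilde f' ξ := by
  have hsymbol : ((-|ξ| / (|ξ| + a) : ℝ) : ℂ) = -(s / (|ξ| + a : ℝ)) * ξ := by
    have hs' : ((|ξ| : ℝ) : ℂ) = s * ξ := by rw [hs, Complex.ofReal_mul]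
    push_cast
    linear_combination -((|ξ| : ℝ) + a : ℂ)⁻¹ * hs'
  rw [multiplierIntegrand, hsymbol, mul_right_comm, mul_smul, smul_fourierTilde hf hf' hf'_int,
    smul_smul, smul_smul]
  congr 1
  ring

lemma multiplierIntegrand_neg_add (hf : Integrable f) (hf' : ∀ y, HasDerivAt f (f' y) y)
    (hf'_int : Integrable f') (a x : ℝ) {ξ : ℝ} (hξ : 0 ≤ ξ) :
    multiplierIntegrand a f x (-ξ) + multiplierIntegrand a f x ξ =
      (-2 : ℝ) • ∫ t, (Real.sin (ξ * (x - t)) / (|ξ| + a)) • f' t := by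
  have hpos := multiplierIntegrand_eq_smul_fourierTilde_deriv hf hf' hf'_int a x (s := 1)
    (ξ := ξ) (by rw [abs_of_nonneg hξ, one_mul])
  have hneg := multiplierIntegrand_eq_smul_fourierTilde_deriv hf hf' hf'_int a x (s := -1)
    (ξ := -ξ) (by rw [abs_neg, abs_of_nonneg hξ]; ring)
  have hscalar : ∫ t, (Real.sin (ξ * (x - t)) / (|ξ| + a)) • f' t =
      (|ξ| + a)⁻¹ • ∫ t, Real.sin (ξ * (x - t)) • f' t := by
    simp only [← integral_smul, smul_smul, div_eq_inv_mul]
  calc multiplierIntegrand a f x (-ξ) + multiplierIntegrand a f x ξ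
      = (-(Complex.I / (|ξ| + a : ℝ))) •
          (Complex.exp (-(Complex.I * ξ * x)) • fourierTilde f' ξ -
            Complex.exp (Complex.I * ξ * x) • fourierTilde f' (-ξ)) := by
        rw [hpos, hneg, abs_neg, smul_sub, sub_eq_neg_add, ← neg_smul]
        push_cast
        simp only [mul_neg, neg_mul, mul_one, neg_neg, neg_div]
    _ = (-(Complex.I / (|ξ| + a : ℝ)) * (-2 * Complex.I)) •
          ∫ t, Real.sin (ξ * (x - t)) • f' t := by
        rw [exp_smul_fourierTilde_sub hf'_int, smul_smul]
    _ = (-2 : ℝ) • ∫ t, (Real.sin (ξ * (x - t)) / (|ξ| + a)) • f' t := by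
        rw [hscalar, smul_smul, ← Complex.coe_smul (-2 * _)]
        congr 1
        push_cast
        linear_combination (2 / ((|ξ| : ℝ) + a : ℂ)) * Complex.I_sq

lemma integral_neg_self_eq_integral_add_comp_neg {h : ℝ → E} (hh : Continuous h) (R : ℝ) :
    ∫ ξ in (-R)..R, h ξ = ∫ ξ in (0 : ℝ)..R, (h (-ξ) + h ξ) := by
  have hh_neg : Continuous fun ξ => h (-ξ) := hh.comp continuous_neg
  rw [intervalIntegral.integral_add (hh_neg.intervalIntegrable 0 R) (hh.intervalIntegrable 0 R),
    intervalIntegral.integral_comp_neg, neg_zero,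
    intervalIntegral.integral_add_adjacent_intervals (hh.intervalIntegrable _ _)
    (hh.intervalIntegrable _ _)]

lemma integral_multiplierIntegrand [CompleteSpace E] (ha : 0 < a) (hR : 0 ≤ R) (hf : Integrable f)
    (hf' : ∀ y, HasDerivAt f (f' y) y) (hf'_int : Integrable f') (x : ℝ) :
    ∫ ξ in (-R)..R, multiplierIntegrand a f x ξ =
      (2 : ℝ) • ∫ t, truncSker a R (x - t) • f' t := by
  have hfold : Set.EqOn
      (fun ξ => multiplierIntegrand a f x (-ξ) + multiplierIntegrand a f x ξ)
      (fun ξ => (-2 : ℝ) • ∫ t, (Real.sin (ξ * (x - t)) / (|ξ| + a)) • f' t) (Set.uIcc 0 R) :=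
    fun ξ hξ => multiplierIntegrand_neg_add hf hf' hf'_int a x (Set.uIcc_of_le hR ▸ hξ).1
  rw [integral_neg_self_eq_integral_add_comp_neg (continuous_multiplierIntegrand ha hf x),
    intervalIntegral.integral_congr hfold, intervalIntegral.integral_smul,
    integral_integral_sin_div_smul ha hf'_int, smul_neg, neg_smul, neg_neg]

theorem stmt19_general [CompleteSpace E] (ha : 0 < a) (hf : Integrable f)
    (hf' : ∀ y, HasDerivAt f (f' y) y) (hf'_int : Integrable f') (x : ℝ) :
    Tendsto
      (fun R : ℝ => (1 / (2 * (Real.pi : ℂ))) •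
        ∫ ξ in (-R)..R, (((-|ξ| / (|ξ| + a) : ℝ) : ℂ) * Complex.exp (-(Complex.I * ξ * x))) •
          ∫ y : ℝ, Complex.exp (Complex.I * ξ * y) • f y)
      atTop (𝓝 ((1 / Real.pi) • ∫ t : ℝ, Sker a (x - t) • f' t)) := by
  refine ((tendsto_integral_truncSker_smul ha hf'_int x).const_smul (1 / Real.pi)).congr' ?_
  filter_upwards [eventually_ge_atTop 0] with R hR
  have h := integral_multiplierIntegrand ha hR hf hf' hf'_int x
  simp only [multiplierIntegrand, fourierTilde] at h
  rw [h, ← Complex.coe_smul, ← Complex.coe_smul, smul_smul]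
  congr 1
  push_cast
  field_simp

end FourierMultiplier

/-- for a Schwartz function `f` with Fourier transform
`f̃(ξ) = ∫ f(x) e^{iξx} dx`, the (improper) inverse transform of
`[-|ξ|/(|ξ|+a)]·f̃(ξ)` equals `(1/π)·(S_a ∗ f')(x)`. -/
theorem stmt19 (a : ℝ) (ha : 0 < a) (f : SchwartzMap ℝ ℝ) (x : ℝ) :
    Tendsto
      (fun R : ℝ => (1 / (2 * (Real.pi : ℂ))) *
        ∫ ξ in (-R)..R, ((-|ξ| / (|ξ| + a) : ℝ) : ℂ) *
          (∫ y : ℝ, (f y : ℂ) * Complex.exp (Complex.I * ξ * y)) *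
          Complex.exp (-(Complex.I * ξ * x)))
      atTop
      (nhds (((1 / Real.pi) * ∫ t : ℝ, Sker a (x - t) * deriv f t : ℝ) : ℂ)) := by
  have hf'_int : Integrable (deriv f) := (SchwartzMap.derivCLM ℝ ℝ f).integrable
  simpa [mul_comm, mul_left_comm, mul_assoc, ← integral_complex_ofReal] using
    stmt19_general ha f.integrable.ofReal (fun y => (f.hasDerivAt y).ofReal_comp) hf'_int.ofReal x
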